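/- Let K = ℚ(√−3) with ring of integers O_K and let u, v ∈ O_K^× be units. If x, y, z ∈ O_K are not all zero, generate the unit ideal of O_K, and satisfy x³ + u·y³ + v·z³ = 0, then either x·y·z = 0 or all three of x, y, z are units of O_K. -/

import Mathlib

open NumberField

/-!
Write `ω` for a primitive cube root of unity in `𝓞 K` and `ϖ = ω - 1` for the prime above `3`. The
three terms of the equation are pairwise coprime, have sum zero, and their product is a cube up to a
unit; `𝓞 K` being principal, each term is then a unit times a cube.

If `ϖ` divides one term, the other two are `α x³` and `-α y³` for the same unit `α`, because cubes
prime to `ϖ` are `±1` modulo `ϖ⁴` and units are determined by their class modulo `ϖ²`. Dividing the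
factors `x - y`, `x - ω y`, `x - ω² y` of `x³ - y³` by `ϖ`, and scaling by powers of `ω`, gives
three elements with the same properties, one of them still divisible by `ϖ`, whose product has
smaller `ϖ`-adic valuation; by infinite descent the term divisible by `ϖ` vanishes.

If `ϖ` divides none of the terms `A`, `B`, `C`, reduction modulo `ϖ³` shows, up to exchanging `B`
and `C`, that `ϖ³` divides `A + ω B + ω² C = 3 p`, so that `ϖ ∣ p`. With `q = A - p` one has
`A B C = p³ + q³`, hence `p³`, `q³`, `-A B C` fall under the first case and `p = 0`. Then `A`, `B`,
`C` are multiples of one another by units, and being coprime they are units.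
-/

theorem isCoprime_of_span_triple_eq_top {R : Type*} [CommRing R] {x y z : R} {n : ℕ}
    (hspan : Ideal.span {x, y, z} = ⊤) (hz : z ^ n ∈ Ideal.span {x, y}) : IsCoprime x y := by
  rw [← Ideal.isCoprime_span_singleton_iff, Ideal.isCoprime_iff_sup_eq, ← Ideal.span_insert,
    ← Ideal.radical_eq_top, eq_top_iff, ← hspan, Ideal.span_le]
  rintro t (rfl | rfl | rfl)
  · exact Ideal.le_radical (Ideal.subset_span (by simp))
  · exact Ideal.le_radical (Ideal.subset_span (by simp))
  · exact ⟨n, hz⟩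

/-- Three pairwise coprime elements with sum zero whose product is a cube up to a unit. In a
principal ideal domain each of them is then a cube up to a unit, so that these triples are the
primitive solutions of all the equations `u₁ x³ + u₂ y³ + u₃ z³ = 0` at once. Coprimality of `B`,
`C` and of `A`, `C` follows from the vanishing of the sum and is not recorded. -/
structure IsCubeTriple {R : Type*} [CommRing R] (A B C : R) : Prop where
  isCoprime : IsCoprime A B
  add_add_eq_zero : A + B + C = 0
  exists_associated_cube : ∃ d, Associated (d ^ 3) (A * B * C)

namespace IsCubeTriple

variable {R : Type*} [CommRing R] {A B C : R}

theorem swap_right (h : IsCubeTriple A B C) : IsCubeTriple A C B where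
  isCoprime := by
    obtain ⟨a, b, hab⟩ := h.isCoprime
    exact ⟨a - b, -b, by linear_combination hab - b * h.add_add_eq_zero⟩
  add_add_eq_zero := by linear_combination h.add_add_eq_zero
  exists_associated_cube := by simpa only [mul_right_comm] using h.exists_associated_cube

theorem swap_left (h : IsCubeTriple A B C) : IsCubeTriple B A C where
  isCoprime := h.isCoprime.symm
  add_add_eq_zero := by linear_combination h.add_add_eq_zero
  exists_associated_cube := by simpa only [mul_comm B A] using h.exists_associated_cube

theorem rotate (h : IsCubeTriple A B C) : IsCubeTriple B C A :=
  h.swap_left.swap_right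

theorem exists_associated_cube_left [IsDomain R] [IsBezout R] (h : IsCubeTriple A B C) :
    ∃ a, Associated (a ^ 3) A := by
  obtain ⟨d, hd⟩ := h.exists_associated_cube
  rw [mul_assoc] at hd
  exact exists_associated_pow_of_associated_pow_mul
    (h.isCoprime.mul_right h.swap_right.isCoprime) hd

theorem of_cube_add_eq_zero {x y z : R} {u v : Rˣ} (hspan : Ideal.span {x, y, z} = ⊤)
    (heq : x ^ 3 + u * y ^ 3 + v * z ^ 3 = 0) :
    IsCubeTriple (x ^ 3) (u * y ^ 3) (v * z ^ 3) where
  isCoprime := by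
    rw [isCoprime_mul_unit_left_right u.isUnit]
    refine (isCoprime_of_span_triple_eq_top (n := 3) hspan (Ideal.mem_span_pair.2
      ⟨-↑v⁻¹ * x ^ 2, -↑v⁻¹ * u * y ^ 2, ?_⟩)).pow
    linear_combination -↑v⁻¹ * heq + z ^ 3 * v.inv_mul
  add_add_eq_zero := heq
  exists_associated_cube := ⟨x * y * z, u * v, by push_cast; ring⟩

end IsCubeTriple

section CubeRootOfUnity

variable {R : Type*} [CommRing R] {ω : R}

theorem cube_eq_one_of_sq_add_self_add_one_eq_zero (hω : ω ^ 2 + ω + 1 = 0) : ω ^ 3 = 1 := by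
  linear_combination (ω - 1) * hω

theorem isUnit_of_sq_add_self_add_one_eq_zero (hω : ω ^ 2 + ω + 1 = 0) : IsUnit ω :=
  .of_mul_eq_one (ω ^ 2) (by linear_combination cube_eq_one_of_sq_add_self_add_one_eq_zero hω)

theorem three_eq_neg_sq_mul_sub_one_sq (hω : ω ^ 2 + ω + 1 = 0) :
    (3 : R) = -ω ^ 2 * (ω - 1) ^ 2 := by
  linear_combination (ω ^ 2 - 3 * ω + 3) * hω

theorem cube_add_cube_eq_mul (hω : ω ^ 2 + ω + 1 = 0) (p q : R) :
    p ^ 3 + q ^ 3 = (p + q) * (ω * p + ω ^ 2 * q) * (ω ^ 2 * p + ω * q) := by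
  linear_combination -((p + q) * (p ^ 2 * (ω - 1) + q ^ 2 * (ω - 1)
    + p * q * (ω ^ 2 - ω + 1))) * hω

theorem cube_sub_cube_eq_sub_one_cube_mul (hω : ω ^ 2 + ω + 1 = 0) (t y : R) :
    (y + (ω - 1) * t) ^ 3 - y ^ 3
      = (ω - 1) ^ 3 * (t * (ω * (t - y)) * (ω ^ 2 * t + ω * y)) := by
  linear_combination cube_add_cube_eq_mul hω (y + (ω - 1) * t) (-y)

theorem IsCubeTriple.of_cube_sub_cube [IsDomain R] (hω : ω ^ 2 + ω + 1 = 0) (hω₁ : ω ≠ 1)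
    {t y d : R} (hcop : IsCoprime (y + (ω - 1) * t) y)
    (hd : Associated (((ω - 1) * d) ^ 3) ((y + (ω - 1) * t) ^ 3 - y ^ 3)) :
    IsCubeTriple t (ω * (t - y)) (ω ^ 2 * t + ω * y) where
  isCoprime := by
    obtain ⟨a, b, hab⟩ := hcop
    refine ⟨a * (ω - 1) + a + b, -ω ^ 2 * (a + b), ?_⟩
    linear_combination hab
      - (a + b) * (t - y) * cube_eq_one_of_sq_add_self_add_one_eq_zero hω
  add_add_eq_zero := by linear_combination t * hω
  exists_associated_cube := by
    rw [cube_sub_cube_eq_sub_one_cube_mul hω, mul_pow] at hd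
    exact ⟨d, hd.of_mul_left (.refl _) (pow_ne_zero 3 (sub_ne_zero.2 hω₁))⟩

theorem eq_of_resolvent_eq_three_mul [IsDomain R] (hω : ω ^ 2 + ω + 1 = 0) (h₃ : (3 : R) ≠ 0)
    {A B C p : R} (hsum : A + B + C = 0) (hp : A + ω * B + ω ^ 2 * C = 3 * p) :
    B = ω ^ 2 * p + ω * (A - p) ∧ C = ω * p + ω ^ 2 * (A - p) := by
  constructor <;> apply mul_left_cancel₀ h₃
  · linear_combination (ω ^ 2 - ω) * hp + (1 - ω) * hsum
      + (-A + (2 - ω) * B - (ω - 1) ^ 2 * C) * hω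
  · linear_combination (ω - ω ^ 2) * hp + (2 + ω) * hsum
      + (-2 * A + (ω - 2) * B + (ω - 1) ^ 2 * C) * hω

theorem IsCubeTriple.cubes_of_factors (hω : ω ^ 2 + ω + 1 = 0) {p q : R}
    (h : IsCubeTriple (p + q) (ω * p + ω ^ 2 * q) (ω ^ 2 * p + ω * q)) :
    IsCubeTriple (p ^ 3) (q ^ 3) (-((p + q) * (ω * p + ω ^ 2 * q) * (ω ^ 2 * p + ω * q))) where
  isCoprime := by
    obtain ⟨a, b, hab⟩ := h.isCoprime
    exact IsCoprime.pow ⟨a + b * ω, a + b * ω ^ 2, by linear_combination hab⟩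
  add_add_eq_zero := by linear_combination cube_add_cube_eq_mul hω p q
  exists_associated_cube := by
    obtain ⟨d, hd⟩ := h.exists_associated_cube
    refine ⟨p * q * d, ?_⟩
    rw [mul_pow, mul_pow, mul_neg, Associated.neg_right_iff]
    exact hd.mul_left _

end CubeRootOfUnity

section Eisenstein

open IsCyclotomicExtension.Rat.Three

variable {K : Type*} [Field K] {ζ : K} (hζ : IsPrimitiveRoot ζ 3)

local notation "ω" => IsPrimitiveRoot.toInteger hζ
local notation "ϖ" => IsPrimitiveRoot.toInteger hζ - 1

include hζ

theorem toInteger_sq_add_self_add_one : ω ^ 2 + ω + 1 = 0 :=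
  eta_sq_add_eta_add_one hζ

theorem associated_varpi_sq_three : Associated (ϖ ^ 2) 3 := by
  have hω := toInteger_sq_add_self_add_one hζ
  rw [three_eq_neg_sq_mul_sub_one_sq hω]
  exact associated_unit_mul_right _ _ ((isUnit_of_sq_add_self_add_one_eq_zero hω).pow 2).neg

variable [NumberField K] [IsCyclotomicExtension {3} ℚ K]

theorem varpi_not_dvd_unit (u : (𝓞 K)ˣ) : ¬ ϖ ∣ u :=
  fun h ↦ hζ.zeta_sub_one_prime'.not_isUnit (isUnit_of_dvd_unit h u.isUnit)

theorem varpi_not_dvd_two : ¬ ϖ ∣ 2 := fun h ↦ by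
  have h₃ : ϖ ∣ 3 := by exact_mod_cast hζ.toInteger_sub_one_dvd_prime'
  refine hζ.zeta_sub_one_prime'.not_dvd_one ?_
  convert dvd_sub h₃ h using 1
  norm_num

theorem varpi_pow_three_not_dvd_three : ¬ ϖ ^ 3 ∣ 3 := by
  have hϖ := hζ.zeta_sub_one_prime'
  rw [← (associated_varpi_sq_three hζ).dvd_iff_dvd_right,
    pow_dvd_pow_iff hϖ.ne_zero hϖ.not_isUnit]
  norm_num

theorem units_eq_of_varpi_sq_dvd_sub {u v : (𝓞 K)ˣ} (h : ϖ ^ 2 ∣ (u : 𝓞 K) - v) : u = v := by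
  have hquot : ϖ ^ 2 ∣ ((u * v⁻¹ : (𝓞 K)ˣ) : 𝓞 K) - 1 := by
    have := h.mul_right ((v⁻¹ : (𝓞 K)ˣ) : 𝓞 K)
    rwa [sub_mul, ← Units.val_mul, ← Units.val_mul, mul_inv_cancel, Units.val_one] at this
  rcases eq_one_or_neg_one_of_unit_of_congruent hζ _ ⟨1, by rwa [Int.cast_one]⟩ with huv | huv
  · exact mul_inv_eq_one.1 huv
  · rw [huv] at hquot
    refine absurd ?_ (varpi_not_dvd_two hζ)
    convert ((dvd_pow_self ϖ two_ne_zero).trans hquot).neg_right using 1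
    push_cast
    norm_num

theorem unit_eq_one_or_omega_or_omega_sq {u : (𝓞 K)ˣ} (hu : ϖ ∣ (u : 𝓞 K) - 1) :
    (u : 𝓞 K) = 1 ∨ (u : 𝓞 K) = ω ∨ (u : 𝓞 K) = ω ^ 2 := by
  have not_neg {w : 𝓞 K} (hw : ϖ ∣ w - 1) (huw : (u : 𝓞 K) = -w) : False := by
    refine varpi_not_dvd_two hζ ?_
    convert (dvd_add hu hw).neg_right using 1
    linear_combination huw
  have hsq : ϖ ∣ ω ^ 2 - 1 := sub_one_dvd_pow_sub_one ..
  have hmem := Units.mem hζ u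
  simp only [List.mem_cons, List.not_mem_nil, or_false, Units.ext_iff, Units.val_neg,
    Units.val_pow_eq_pow_val, Units.val_one, IsUnit.unit_spec] at hmem
  have := not_neg (w := 1) (by simp)
  have := not_neg (dvd_refl ϖ)
  have := not_neg hsq
  tauto

theorem eq_omega_of_varpi_pow_three_dvd_one_add_add {u v : (𝓞 K)ˣ}
    (h : ϖ ^ 3 ∣ 1 + (u : 𝓞 K) + v) :
    ((u : 𝓞 K) = ω ∧ (v : 𝓞 K) = ω ^ 2) ∨ ((u : 𝓞 K) = ω ^ 2 ∧ (v : 𝓞 K) = ω) := by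
  have hω := toInteger_sq_add_self_add_one hζ
  have hu : ϖ ∣ (u : 𝓞 K) - 1 := by
    rcases lambda_dvd_or_dvd_sub_one_or_dvd_add_one hζ (u : 𝓞 K) with hu | hu | hu
    · exact absurd hu (varpi_not_dvd_unit hζ u)
    · exact hu
    · refine absurd ?_ (varpi_not_dvd_unit hζ v)
      convert dvd_sub ((dvd_pow_self ϖ three_ne_zero).trans h) hu using 1
      ring
  have eq_of_sum_zero {w : (𝓞 K)ˣ} (hw : 1 + (u : 𝓞 K) + w = 0) : v = w := by
    refine units_eq_of_varpi_sq_dvd_sub hζ ((pow_dvd_pow ϖ (by norm_num : 2 ≤ 3)).trans ?_)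
    convert h using 1
    linear_combination -hw
  obtain ⟨w, hw⟩ := isUnit_of_sq_add_self_add_one_eq_zero hω
  rcases unit_eq_one_or_omega_or_omega_sq hζ hu with hu | hu | hu
  · have hv : v = 1 := by
      refine units_eq_of_varpi_sq_dvd_sub hζ ?_
      convert dvd_sub ((pow_dvd_pow ϖ (by norm_num : 2 ≤ 3)).trans h)
        (associated_varpi_sq_three hζ).dvd using 1
      rw [hu, Units.val_one]
      ring
    refine absurd ?_ (varpi_pow_three_not_dvd_three hζ)
    convert h using 1
    rw [hu, hv, Units.val_one]
    norm_num
  · have hv := eq_of_sum_zero (w := w ^ 2) (by push_cast; rw [hu, hw]; linear_combination hω)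
    exact .inl ⟨hu, by rw [hv, Units.val_pow_eq_pow_val, hw]⟩
  · have hv := eq_of_sum_zero (w := w) (by rw [hu, hw]; linear_combination hω)
    exact .inr ⟨hu, by rw [hv, hw]⟩

theorem exists_eq_unit_mul_cube {a A : 𝓞 K} (ha : Associated (a ^ 3) A) (hA : ¬ ϖ ∣ A) :
    ∃ (α : (𝓞 K)ˣ) (x : 𝓞 K), A = α * x ^ 3 ∧ ϖ ∣ x - 1 := by
  obtain ⟨α, rfl⟩ := ha
  have hdvd : ¬ ϖ ∣ a := fun h ↦ hA ((dvd_pow h three_ne_zero).mul_right _)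
  rcases lambda_dvd_or_dvd_sub_one_or_dvd_add_one hζ a with h | h | h
  · exact absurd h hdvd
  · exact ⟨α, a, mul_comm _ _, h⟩
  · refine ⟨-α, -a, by push_cast; ring, ?_⟩
    convert h.neg_right using 1
    ring

theorem varpi_pow_four_dvd_unit_mul_cube_sub {α : (𝓞 K)ˣ} {x : 𝓞 K} (hx : ϖ ∣ x - 1) :
    ϖ ^ 4 ∣ α * x ^ 3 - α := by
  simpa only [mul_sub, mul_one] using
    (lambda_pow_four_dvd_cube_sub_one_of_dvd_sub_one hζ hx).mul_left (α : 𝓞 K)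

namespace IsCubeTriple

variable {A B C : 𝓞 K}

theorem not_varpi_dvd_left (h : IsCubeTriple A B C) (hC : ϖ ∣ C) : ¬ ϖ ∣ A :=
  fun hA ↦ hζ.zeta_sub_one_prime'.not_isUnit (h.swap_right.isCoprime.isUnit_of_dvd' hA hC)

theorem varpi_pow_three_dvd (h : IsCubeTriple A B C) (hC : ϖ ∣ C) : ϖ ^ 3 ∣ C := by
  have := IsCyclotomicExtension.Rat.three_pid K
  obtain ⟨c, hc⟩ := h.rotate.rotate.exists_associated_cube_left
  rw [← hc.dvd_iff_dvd_right] at hC ⊢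
  exact pow_dvd_pow_of_dvd (hζ.zeta_sub_one_prime'.dvd_of_dvd_pow hC) 3

theorem exists_eq_mul_cube_and_eq_neg_mul_cube (h : IsCubeTriple A B C) (hC : ϖ ∣ C) :
    ∃ (α : (𝓞 K)ˣ) (x y : 𝓞 K), A = α * x ^ 3 ∧ B = -α * y ^ 3 ∧ ϖ ∣ x - 1 ∧ ϖ ∣ y - 1 := by
  have := IsCyclotomicExtension.Rat.three_pid K
  obtain ⟨a, ha⟩ := h.exists_associated_cube_left
  obtain ⟨b, hb⟩ := h.rotate.exists_associated_cube_left
  obtain ⟨α, x, rfl, hx⟩ := exists_eq_unit_mul_cube hζ ha (h.not_varpi_dvd_left hζ hC)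
  obtain ⟨β, y, rfl, hy⟩ := exists_eq_unit_mul_cube hζ hb (h.swap_left.not_varpi_dvd_left hζ hC)
  suffices hαβ : β = -α from ⟨α, x, y, rfl, by rw [hαβ, Units.val_neg], hx, hy⟩
  apply units_eq_of_varpi_sq_dvd_sub hζ
  have hα := (pow_dvd_pow ϖ (by norm_num : 2 ≤ 4)).trans
    (varpi_pow_four_dvd_unit_mul_cube_sub hζ (α := α) hx)
  have hβ := (pow_dvd_pow ϖ (by norm_num : 2 ≤ 4)).trans
    (varpi_pow_four_dvd_unit_mul_cube_sub hζ (α := β) hy)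
  have hC₂ := (pow_dvd_pow ϖ (by norm_num : 2 ≤ 3)).trans (h.varpi_pow_three_dvd hζ hC)
  convert (dvd_add (dvd_add hα hβ) hC₂).neg_right using 1
  push_cast
  linear_combination h.add_add_eq_zero

theorem exists_isCubeTriple_varpi_pow_three_mul_dvd (h : IsCubeTriple A B C) (hC : ϖ ∣ C) :
    ∃ A' B' C' : 𝓞 K, IsCubeTriple A' B' C' ∧
      ϖ ∣ A' * B' * C' ∧ ϖ ^ 3 * (A' * B' * C') ∣ C := by
  have := IsCyclotomicExtension.Rat.three_pid K
  have hω := toInteger_sq_add_self_add_one hζ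
  have hϖ := hζ.zeta_sub_one_prime'
  obtain ⟨α, x, y, rfl, rfl, hx, hy⟩ := h.exists_eq_mul_cube_and_eq_neg_mul_cube hζ hC
  obtain ⟨t, ht⟩ : ϖ ∣ x - y := by simpa using dvd_sub hx hy
  obtain rfl : x = y + ϖ * t := by linear_combination ht
  have hprod := cube_sub_cube_eq_sub_one_cube_mul hω t y
  have hCeq : C = ((-α : (𝓞 K)ˣ) : 𝓞 K) * ((y + ϖ * t) ^ 3 - y ^ 3) := by
    push_cast
    linear_combination h.add_add_eq_zero
  have hC₄ : ϖ ^ 4 ∣ C := by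
    convert dvd_sub (varpi_pow_four_dvd_unit_mul_cube_sub hζ (α := α) hy)
      (varpi_pow_four_dvd_unit_mul_cube_sub hζ (α := α) hx) using 1
    linear_combination h.add_add_eq_zero
  obtain ⟨c, hc⟩ := h.rotate.rotate.exists_associated_cube_left
  obtain ⟨d, rfl⟩ : ϖ ∣ c := hϖ.dvd_of_dvd_pow (hc.dvd_iff_dvd_right.2 hC)
  refine ⟨t, _, _, .of_cube_sub_cube (y := y) (d := d) hω (sub_ne_zero.1 hϖ.ne_zero) ?_ ?_,
    ?_, ?_⟩
  · rw [← IsCoprime.pow_iff three_pos three_pos]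
    exact h.isCoprime.of_mul_left_right.of_mul_right_right
  · rw [hCeq] at hc
    exact hc.trans (associated_unit_mul_left _ _ (Units.isUnit _))
  · rw [hCeq, Units.dvd_mul_left, hprod, pow_succ] at hC₄
    exact (mul_dvd_mul_iff_left (pow_ne_zero 3 hϖ.ne_zero)).1 hC₄
  · rw [hCeq, Units.dvd_mul_left, hprod]

theorem varpi_pow_dvd (h : IsCubeTriple A B C) (hC : ϖ ∣ C) (n : ℕ) : ϖ ^ n ∣ C := by
  induction n generalizing A B C with
  | zero => simp
  | succ n ih =>
    obtain ⟨A', B', C', h', hdvd, hmul⟩ := h.exists_isCubeTriple_varpi_pow_three_mul_dvd hζ hC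
    have hprod : ϖ ^ n ∣ A' * B' * C' := by
      rcases hζ.zeta_sub_one_prime'.dvd_mul.1 hdvd with hAB | hC'
      · rcases hζ.zeta_sub_one_prime'.dvd_mul.1 hAB with hA' | hB'
        · exact ((ih h'.rotate hA').mul_right _).mul_right _
        · exact ((ih h'.swap_right hB').mul_left _).mul_right _
      · exact (ih h' hC').mul_left _
    calc ϖ ^ (n + 1) ∣ ϖ ^ 3 * ϖ ^ n := by
          rw [← pow_add]; exact pow_dvd_pow ϖ (by lia)
      _ ∣ ϖ ^ 3 * (A' * B' * C') := mul_dvd_mul_left _ hprod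
      _ ∣ C := hmul

theorem eq_zero_of_varpi_dvd (h : IsCubeTriple A B C) (hC : ϖ ∣ C) : C = 0 := by
  by_contra hne
  obtain ⟨n, hn⟩ := FiniteMultiplicity.of_not_isUnit hζ.zeta_sub_one_prime'.not_isUnit hne
  exact hn (h.varpi_pow_dvd hζ hC _)

theorem isUnit_of_varpi_pow_three_dvd_resolvent (h : IsCubeTriple A B C)
    (hres : ϖ ^ 3 ∣ A + ω * B + ω ^ 2 * C) : IsUnit A ∧ IsUnit B ∧ IsUnit C := by
  have hω := toInteger_sq_add_self_add_one hζ
  have hωu := isUnit_of_sq_add_self_add_one_eq_zero hω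
  obtain ⟨p, hϖp, hp⟩ : ∃ p, ϖ ∣ p ∧ A + ω * B + ω ^ 2 * C = 3 * p := by
    rw [pow_succ, ((associated_varpi_sq_three hζ).mul_right ϖ).dvd_iff_dvd_left] at hres
    obtain ⟨r, hr⟩ := hres
    exact ⟨ϖ * r, dvd_mul_right .., by rw [hr, mul_assoc]⟩
  have h₃ : (3 : 𝓞 K) ≠ 0 := by norm_num
  obtain ⟨hB, hC⟩ := eq_of_resolvent_eq_three_mul hω h₃ h.add_add_eq_zero hp
  obtain ⟨q, rfl⟩ : ∃ q, A = p + q := ⟨A - p, by ring⟩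
  rw [add_sub_cancel_left] at hB hC
  subst hB hC
  have hp₀ : p = 0 := pow_eq_zero_iff three_ne_zero |>.1 <|
    (IsCubeTriple.cubes_of_factors hω h.swap_right).rotate.eq_zero_of_varpi_dvd hζ
      (dvd_pow hϖp three_ne_zero)
  subst hp₀
  have hq : IsUnit q := by
    refine h.isCoprime.isUnit_of_dvd' ?_ ?_ <;> simp
  exact ⟨by simpa using hq, by simpa using ⟨hωu, hq⟩, by simpa using ⟨hωu, hq⟩⟩

theorem exists_unit_varpi_pow_four_dvd_sub (h : IsCubeTriple A B C) (hA : ¬ ϖ ∣ A) :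
    ∃ α : (𝓞 K)ˣ, ϖ ^ 4 ∣ A - α := by
  have := IsCyclotomicExtension.Rat.three_pid K
  obtain ⟨a, ha⟩ := h.exists_associated_cube_left
  obtain ⟨α, x, rfl, hx⟩ := exists_eq_unit_mul_cube hζ ha hA
  exact ⟨α, varpi_pow_four_dvd_unit_mul_cube_sub hζ hx⟩

theorem varpi_pow_three_dvd_resolvent (h : IsCubeTriple A B C)
    (hA : ¬ ϖ ∣ A) (hB : ¬ ϖ ∣ B) (hC : ¬ ϖ ∣ C) :
    ϖ ^ 3 ∣ A + ω * B + ω ^ 2 * C ∨ ϖ ^ 3 ∣ A + ω * C + ω ^ 2 * B := by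
  have hω := toInteger_sq_add_self_add_one hζ
  obtain ⟨α, hα⟩ := h.exists_unit_varpi_pow_four_dvd_sub hζ hA
  obtain ⟨β, hβ⟩ := h.rotate.exists_unit_varpi_pow_four_dvd_sub hζ hB
  obtain ⟨γ, hγ⟩ := h.rotate.rotate.exists_unit_varpi_pow_four_dvd_sub hζ hC
  have hsum : ϖ ^ 3 ∣ 1 + ((α⁻¹ * β : (𝓞 K)ˣ) : 𝓞 K) + ((α⁻¹ * γ : (𝓞 K)ˣ) : 𝓞 K) := by
    rw [← Units.dvd_mul_left (u := α)]
    refine (pow_dvd_pow ϖ (by norm_num : 3 ≤ 4)).trans ?_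
    convert (dvd_add (dvd_add hα hβ) hγ).neg_right using 1
    simp only [mul_add, ← Units.val_mul, mul_inv_cancel_left]
    linear_combination h.add_add_eq_zero
  have resolvent_dvd {B C : 𝓞 K} {β γ : (𝓞 K)ˣ} (hβ : ϖ ^ 4 ∣ B - β) (hγ : ϖ ^ 4 ∣ C - γ)
      (hβα : ((α⁻¹ * β : (𝓞 K)ˣ) : 𝓞 K) = ω) (hγα : ((α⁻¹ * γ : (𝓞 K)ˣ) : 𝓞 K) = ω ^ 2) :
      ϖ ^ 3 ∣ A + ω * B + ω ^ 2 * C := by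
    have hβ' : (β : 𝓞 K) = α * ω := by rw [← hβα, ← Units.val_mul, mul_inv_cancel_left]
    have hγ' : (γ : 𝓞 K) = α * ω ^ 2 := by rw [← hγα, ← Units.val_mul, mul_inv_cancel_left]
    refine (pow_dvd_pow ϖ (by norm_num : 3 ≤ 4)).trans ?_
    convert dvd_add (dvd_add hα (hβ.mul_left ω)) (hγ.mul_left (ω ^ 2)) using 1
    rw [hβ', hγ']
    linear_combination (α : 𝓞 K) * (ω ^ 2 - ω + 1) * hω
  rcases eq_omega_of_varpi_pow_three_dvd_one_add_add hζ hsum with ⟨hβα, hγα⟩ | ⟨hβα, hγα⟩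
  · exact .inl (resolvent_dvd hβ hγ hβα hγα)
  · exact .inr (resolvent_dvd hγ hβ hγα hβα)

theorem mul_eq_zero_or_isUnit (h : IsCubeTriple A B C) :
    A * B * C = 0 ∨ (IsUnit A ∧ IsUnit B ∧ IsUnit C) := by
  by_cases hA : ϖ ∣ A
  · simp [h.rotate.eq_zero_of_varpi_dvd hζ hA]
  by_cases hB : ϖ ∣ B
  · simp [h.swap_right.eq_zero_of_varpi_dvd hζ hB]
  by_cases hC : ϖ ∣ C
  · simp [h.eq_zero_of_varpi_dvd hζ hC]
  right
  rcases h.varpi_pow_three_dvd_resolvent hζ hA hB hC with hres | hres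
  · exact h.isUnit_of_varpi_pow_three_dvd_resolvent hζ hres
  · rw [and_comm (a := IsUnit B)]
    exact h.swap_right.isUnit_of_varpi_pow_three_dvd_resolvent hζ hres

end IsCubeTriple

end Eisenstein

theorem isPrimitiveRoot_three_of_sq_eq_neg_three {K : Type*} [Field K] [NeZero (2 : K)]
    [NeZero (3 : K)] {s : K} (hs : s ^ 2 = -3) : IsPrimitiveRoot ((-1 + s) / 2) 3 := by
  have : NeZero ((3 : ℕ) : K) := ⟨by exact_mod_cast three_ne_zero (α := K)⟩
  rw [← Polynomial.isRoot_cyclotomic_iff, Polynomial.cyclotomic_three]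
  have h₂ : (2 : K) ≠ 0 := two_ne_zero
  simp only [Polynomial.IsRoot.def, Polynomial.eval_add, Polynomial.eval_pow, Polynomial.eval_X,
    Polynomial.eval_one]
  field_simp
  linear_combination hs

theorem isCyclotomicExtension_of_finrank_eq_totient {F K : Type*} [Field F] [Field K]
    [Algebra F K] {n : ℕ} [NeZero n] {ζ : K} (hζ : IsPrimitiveRoot ζ n)
    (hirr : Irreducible (Polynomial.cyclotomic n F)) (hdim : Module.finrank F K = n.totient) :
    IsCyclotomicExtension {n} F K := by
  have := hζ.neZero'
  have : NeZero (n : F) := ⟨fun h ↦ NeZero.ne (n : K) (by simpa using congrArg (algebraMap F K) h)⟩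
  have : FiniteDimensional F K :=
    Module.finite_of_finrank_pos (hdim ▸ Nat.totient_pos.2 (NeZero.pos n))
  have htop : IntermediateField.adjoin F {ζ} = ⊤ := by
    rw [Field.primitive_element_iff_minpoly_natDegree_eq, hdim,
      ← hζ.minpoly_eq_cyclotomic_of_irreducible hirr, Polynomial.natDegree_cyclotomic]
  have := hζ.intermediateField_adjoin_isCyclotomicExtension F
  rw [htop] at this
  exact IsCyclotomicExtension.equiv {n} F _ IntermediateField.topEquiv

/-- Let `K = ℚ(√-3)` with ring of integers `O_K` and let `u, v` be units of `O_K`.  If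
`x, y, z ∈ O_K` are not all zero, generate the unit ideal, and satisfy
`x³ + u y³ + v z³ = 0`, then either `x y z = 0` or `x`, `y`, `z` are all units. -/
theorem twisted_fermat_cubic_points_over_Q_sqrt_neg_three
    (K : Type) [Field K] [NumberField K]
    (s : K) (hs : s ^ 2 = -3) (hK : Module.finrank ℚ K = 2)
    (u v : (𝓞 K)ˣ) (x y z : 𝓞 K)
    (hnz : ¬(x = 0 ∧ y = 0 ∧ z = 0))
    (hcop : Ideal.span ({x, y, z} : Set (𝓞 K)) = ⊤)
    (heq : x ^ 3 + (u : 𝓞 K) * y ^ 3 + (v : 𝓞 K) * z ^ 3 = 0) :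
    x * y * z = 0 ∨ (IsUnit x ∧ IsUnit y ∧ IsUnit z) := by
  have hζ := isPrimitiveRoot_three_of_sq_eq_neg_three hs
  have : IsCyclotomicExtension {3} ℚ K := isCyclotomicExtension_of_finrank_eq_totient hζ
    (Polynomial.cyclotomic.irreducible_rat three_pos)
    (by rw [hK, Nat.totient_prime Nat.prime_three])
  have h := (IsCubeTriple.of_cube_add_eq_zero hcop heq).mul_eq_zero_or_isUnit hζ
  simpa [isUnit_pow_iff] using h
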